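/- arXiv:2003.10887 — 2 statements merged into one kernel-verified Lean document; each statement's English description precedes it below -/
import Mathlib

section
/- Under the observer setup, let X be an n×n real symmetric positive definite matrix and Y an n×n_y real matrix. Then (X·A + Y·C_y) + (X·A + Y·C_y)ᵀ + (X·B_w̄ + Y·D_w̄)·(X·B_w̄ + Y·D_w̄)ᵀ is negative definite if and only if the symmetric block matrix [[M₁₁, M₁₂, Y], [M₁₂ᵀ, -I_{n_d}, 0], [Yᵀ, 0, -diag(β)]] is negative definite. -/
open Matrix

/-- A real symmetric matrix `M` is negative definite if `xᵀ M x < 0` for all `x ≠ 0`. -/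
def NegDef {n : Type*} [Fintype n] (M : Matrix n n ℝ) : Prop :=
  M.IsSymm ∧ ∀ x : n → ℝ, x ≠ 0 → x ⬝ᵥ M.mulVec x < 0

/-!
If `D` is positive definite and `U = [[1, B D⁻¹], [0, 1]]`, then
`[[A, B], [Bᴴ, D]] = U [[A - B D⁻¹ Bᴴ, 0], [0, D]] Uᴴ`. A congruence by an invertible matrix
preserves definiteness, so the block matrix is positive definite iff its Schur complement
`A - B D⁻¹ Bᴴ` is. The LMI is the negated case with `B = [M₁₂ Y]` and
`D = blockdiag(I, (Sₙ Sₙᵀ)⁻¹)`: since `X B_w̄ + Y D_w̄ = [M₁₂ Y Sₙ]`, the Gram matrix of the latter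
is exactly the correction term `B D⁻¹ Bᵀ`.
-/

section SchurComplement

variable {m n R : Type*} [Finite m] [CommRing R] [PartialOrder R] [StarRing R] [StarOrderedRing R]

theorem posDef_fromBlocks_zero_iff [Finite n] {A : Matrix m m R} {D : Matrix n n R} :
    (fromBlocks A 0 0 D).PosDef ↔ A.PosDef ∧ D.PosDef := by
  have := Fintype.ofFinite m
  have := Fintype.ofFinite n
  refine ⟨fun h ↦ ⟨h.submatrix Sum.inl_injective, h.submatrix Sum.inr_injective⟩, ?_⟩
  rintro ⟨hA, hD⟩
  refine .of_dotProduct_mulVec_pos (hA.isHermitian.fromBlocks (by simp) hD.isHermitian)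
    fun z hz ↦ ?_
  obtain ⟨x, y, rfl⟩ : ∃ x y, z = Sum.elim x y := ⟨_, _, (Sum.elim_comp_inl_inr z).symm⟩
  have form_eq : star (Sum.elim x y) ⬝ᵥ fromBlocks A 0 0 D *ᵥ Sum.elim x y =
      star x ⬝ᵥ A *ᵥ x + star y ⬝ᵥ D *ᵥ y := by
    simp [fromBlocks_mulVec, Function.star_sumElim]
  rw [form_eq]
  obtain rfl | hx := eq_or_ne x 0
  · have hy : y ≠ 0 := by
      rintro rfl
      exact hz (by simp)
    simpa using hD.dotProduct_mulVec_pos hy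
  · exact add_pos_of_pos_of_nonneg (hA.dotProduct_mulVec_pos hx)
      (hD.posSemidef.dotProduct_mulVec_nonneg y)

theorem posDef_fromBlocks_iff_of_posDef₂₂ [Fintype n] [DecidableEq n] (A : Matrix m m R)
    (B : Matrix m n R) {D : Matrix n n R} [Invertible D] (hD : D.PosDef) :
    (fromBlocks A B Bᴴ D).PosDef ↔ (A - B * D⁻¹ * Bᴴ).PosDef := by
  classical
  have := Fintype.ofFinite m
  let U : Matrix (m ⊕ n) (m ⊕ n) R := fromBlocks 1 (B * D⁻¹) 0 1
  have hU : IsUnit U := isUnit_fromBlocks_zero₂₁.mpr ⟨isUnit_one, isUnit_one⟩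
  have star_U : star U = fromBlocks 1 0 (D⁻¹ * Bᴴ) 1 := by
    simp [U, star_eq_conjTranspose, fromBlocks_conjTranspose, conjTranspose_nonsing_inv,
      hD.isHermitian.eq]
  have block_decomposition : fromBlocks A B Bᴴ D =
      U * fromBlocks (A - B * D⁻¹ * Bᴴ) 0 0 D * star U := by
    rw [star_U, fromBlocks_eq_of_invertible₂₂, invOf_eq_nonsing_inv]
  rw [block_decomposition, Matrix.IsUnit.posDef_star_right_conjugate_iff hU,
    posDef_fromBlocks_zero_iff, and_iff_left hD]

end SchurComplement

open scoped ComplexOrder in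
theorem posDef_of_mul_conjTranspose_mul_eq_one {m n 𝕜 : Type*} [Fintype m] [Fintype n]
    [DecidableEq m] [RCLike 𝕜] {S : Matrix m n 𝕜} {P : Matrix m m 𝕜} (hP : S * Sᴴ * P = 1) :
    P.PosDef := by
  have gram_posDef : (S * Sᴴ).PosDef :=
    (posSemidef_self_mul_conjTranspose S).posDef_iff_isUnit.mpr (.of_mul_eq_one P hP)
  exact inv_eq_right_inv hP ▸ gram_posDef.inv

theorem diagonal_mul_transpose_mul_diagonal_inv_sq {n K : Type*} [Fintype n] [DecidableEq n]
    [Field K] {s : n → K} (hs : ∀ i, s i ≠ 0) :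
    diagonal s * (diagonal s)ᵀ * diagonal (fun i ↦ (s i)⁻¹ ^ 2) = 1 := by
  have entry_eq_one (i : n) : s i * s i * (s i)⁻¹ ^ 2 = 1 := by
    have := hs i
    field_simp
  simp only [diagonal_transpose, diagonal_mul_diagonal, entry_eq_one, diagonal_one]

section NegDef

variable {m n p q : Type*} [Fintype m] [Fintype n] [Fintype p] [Fintype q]

theorem negDef_iff_posDef_neg {M : Matrix n n ℝ} : NegDef M ↔ (-M).PosDef := by
  simp [NegDef, posDef_iff_dotProduct_mulVec, IsHermitian, IsSymm, neg_mulVec]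

theorem negDef_fromBlocks_neg₂₂_iff [DecidableEq n] (A : Matrix m m ℝ) (B : Matrix m n ℝ)
    {D : Matrix n n ℝ} (hD : D.PosDef) :
    NegDef (fromBlocks A B Bᵀ (-D)) ↔ NegDef (A + B * D⁻¹ * Bᵀ) := by
  cases hD.isUnit.nonempty_invertible
  have schur := posDef_fromBlocks_iff_of_posDef₂₂ (-A) (-B) hD
  rw [negDef_iff_posDef_neg, negDef_iff_posDef_neg, fromBlocks_neg, neg_neg]
  simpa [sub_eq_add_neg, add_comm] using schur

theorem negDef_add_fromCols_mul_transpose_iff [DecidableEq n] [DecidableEq p]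
    (M : Matrix m m ℝ) (N : Matrix m n ℝ) (Y : Matrix m p ℝ) {S : Matrix p q ℝ}
    {P : Matrix p p ℝ} (hP : S * Sᵀ * P = 1) :
    NegDef (M + fromCols N (Y * S) * (fromCols N (Y * S))ᵀ) ↔
      NegDef (fromBlocks M (fromCols N Y) (fromRows Nᵀ Yᵀ) (fromBlocks (-1) 0 0 (-P))) := by
  let D : Matrix (n ⊕ p) (n ⊕ p) ℝ := fromBlocks 1 0 0 P
  have hD : D.PosDef :=
    posDef_fromBlocks_zero_iff.mpr ⟨.one, posDef_of_mul_conjTranspose_mul_eq_one hP⟩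
  have inv_D : D⁻¹ = fromBlocks 1 0 0 (S * Sᵀ) :=
    inv_eq_left_inv (by simp [D, fromBlocks_multiply, hP])
  have neg_D : fromBlocks (-1) 0 0 (-P) = -D := by
    simp [D, fromBlocks_neg]
  have gram_eq : fromCols N (Y * S) * (fromCols N (Y * S))ᵀ =
      fromCols N Y * D⁻¹ * (fromCols N Y)ᵀ := by
    simp [inv_D, transpose_fromCols, fromCols_mul_fromRows, fromCols_mul_fromBlocks,
      Matrix.mul_assoc]
  rw [gram_eq, neg_D, ← transpose_fromCols, negDef_fromBlocks_neg₂₂_iff M _ hD]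

end NegDef

theorem h2_lmi_schur_step_general {n d e y w : Type*} [Fintype n] [Fintype d] [Fintype e]
    [Fintype y] [Fintype w] [DecidableEq e] [DecidableEq y]
    (A : Matrix n n ℝ) (Cy : Matrix y n ℝ) (Bd : Matrix n d ℝ) (Dd : Matrix y d ℝ)
    (X : Matrix n n ℝ) (Y : Matrix n y ℝ) (Sd : Matrix d e ℝ) {Sn : Matrix y w ℝ}
    {P : Matrix y y ℝ} (hP : Sn * Snᵀ * P = 1) :
    NegDef ((X * A + Y * Cy) + (X * A + Y * Cy)ᵀ
        + (X * fromCols (Bd * Sd) 0 + Y * fromCols (Dd * Sd) Sn)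
          * (X * fromCols (Bd * Sd) 0 + Y * fromCols (Dd * Sd) Sn)ᵀ) ↔
      NegDef (fromBlocks ((X * A + Y * Cy) + (X * A + Y * Cy)ᵀ)
        (fromCols (X * Bd * Sd + Y * Dd * Sd) Y) (fromRows (X * Bd * Sd + Y * Dd * Sd)ᵀ Yᵀ)
        (fromBlocks (-1) 0 0 (-P))) := by
  have input_eq : X * fromCols (Bd * Sd) 0 + Y * fromCols (Dd * Sd) Sn =
      fromCols (X * Bd * Sd + Y * Dd * Sd) (Y * Sn) := by
    ext i (j | j) <;> simp [mul_fromCols, Matrix.mul_assoc]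
  rw [input_eq]
  exact negDef_add_fromCols_mul_transpose_iff _ _ _ hP

/-- Schur-complement step of the sparse `H₂` observer LMI: with
`B_w̄ = [B_d S_d  0]`, `D_w̄ = [D_d S_d  S_n]`, `β i = ((S_n)ᵢᵢ)⁻²`,
`M₁₁ = (XA + YC_y) + (XA + YC_y)ᵀ` and `M₁₂ = X B_d S_d + Y D_d S_d`,
the matrix `M₁₁ + (X B_w̄ + Y D_w̄)(X B_w̄ + Y D_w̄)ᵀ` is negative definite iff
`[[M₁₁, M₁₂, Y], [M₁₂ᵀ, -I, 0], [Yᵀ, 0, -diag β]]` is negative definite. -/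
theorem h2_lmi_schur_step {n nd ny nz : ℕ}
    (A : Matrix (Fin n) (Fin n) ℝ) (Cy : Matrix (Fin ny) (Fin n) ℝ)
    (Cz : Matrix (Fin nz) (Fin n) ℝ) (Bd : Matrix (Fin n) (Fin nd) ℝ)
    (Dd : Matrix (Fin ny) (Fin nd) ℝ)
    (sd : Fin nd → ℝ) (sn : Fin ny → ℝ) (hsn : ∀ i, 0 < sn i)
    (X : Matrix (Fin n) (Fin n) ℝ) (Y : Matrix (Fin n) (Fin ny) ℝ)
    (hX : X.PosDef)
    -- the diagonal scaling matrices
    (Sd : Matrix (Fin nd) (Fin nd) ℝ) (Sn : Matrix (Fin ny) (Fin ny) ℝ)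
    (hSd : Sd = diagonal sd) (hSn : Sn = diagonal sn)
    -- scaled disturbance input matrices
    (Bw : Matrix (Fin n) (Fin nd ⊕ Fin ny) ℝ) (Dw : Matrix (Fin ny) (Fin nd ⊕ Fin ny) ℝ)
    (hBw : Bw = fromCols (Bd * Sd) 0) (hDw : Dw = fromCols (Dd * Sd) Sn)
    -- the precision vector
    (β : Fin ny → ℝ) (hβ : ∀ i, β i = ((sn i)⁻¹) ^ 2)
    -- the LMI blocks
    (M₁₁ : Matrix (Fin n) (Fin n) ℝ) (M₁₂ : Matrix (Fin n) (Fin nd) ℝ)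
    (hM₁₁ : M₁₁ = (X * A + Y * Cy) + (X * A + Y * Cy)ᵀ)
    (hM₁₂ : M₁₂ = X * Bd * Sd + Y * Dd * Sd) :
    NegDef ((X * A + Y * Cy) + (X * A + Y * Cy)ᵀ
        + (X * Bw + Y * Dw) * (X * Bw + Y * Dw)ᵀ) ↔
      NegDef (fromBlocks M₁₁ (fromCols M₁₂ Y) (fromRows M₁₂ᵀ Yᵀ)
        (fromBlocks (-(1 : Matrix (Fin nd) (Fin nd) ℝ)) 0 0 (-(diagonal β)))) := by
  obtain rfl : β = fun i ↦ (sn i)⁻¹ ^ 2 := funext hβ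
  subst hSd hSn hBw hDw hM₁₁ hM₁₂
  exact h2_lmi_schur_step_general A Cy Bd Dd X Y (diagonal sd)
    (diagonal_mul_transpose_mul_diagonal_inv_sq fun i ↦ (hsn i).ne')
end

section
/- Under the observer setup, let X be an n×n real symmetric positive definite matrix and Y an n×n_y real matrix such that the block matrix [[M₁₁, M₁₂, Y], [M₁₂ᵀ, -I_{n_d}, 0], [Yᵀ, 0, -diag(β)]] is negative definite. Then every complex eigenvalue of A + X⁻¹·Y·C_y has negative real part, i.e., the observer error dynamics matrix A + L·C_y with L = X⁻¹·Y is Hurwitz. -/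
open Matrix

/-!
This is Lyapunov's argument. Restricting the LMI to its upper left block gives
`XF + (XF)ᵀ ≺ 0` for `F = A + X⁻¹ Y C_y`, because `XF = XA + Y C_y`. If `F v = μ v` with `v ≠ 0`,
then evaluating this quadratic form at the complex vector `v` gives `2 (Re μ) (v* X v) < 0`, and
`v* X v ≥ 0` forces `Re μ < 0`.
-/

section Complexification

open scoped ComplexOrder MatrixOrder

variable {n 𝕜 : Type*} [Finite n] [RCLike 𝕜] {P : Matrix n n ℝ}

theorem posSemidef_map_ofReal (hP : P.PosSemidef) : (P.map (RCLike.ofReal : ℝ → 𝕜)).PosSemidef := by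
  classical
  cases nonempty_fintype n
  obtain ⟨B, rfl⟩ := CStarAlgebra.nonneg_iff_eq_star_mul_self.mp hP.nonneg
  have map_star_mul_self : (star B * B).map (RCLike.ofReal : ℝ → 𝕜) =
      (B.map RCLike.ofReal)ᴴ * B.map RCLike.ofReal := by
    rw [star_eq_conjTranspose, ← conjTranspose_map _ fun x => by simp]
    exact Matrix.map_mul (f := algebraMap ℝ 𝕜)
  rw [map_star_mul_self]
  exact posSemidef_conjTranspose_mul_self _

theorem posDef_map_ofReal (hP : P.PosDef) : (P.map (RCLike.ofReal : ℝ → 𝕜)).PosDef := by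
  classical
  cases nonempty_fintype n
  exact (posSemidef_map_ofReal hP.posSemidef).posDef_iff_isUnit.mpr
    (hP.isUnit.map (algebraMap ℝ 𝕜).mapMatrix)

end Complexification

namespace NegDef

variable {m n : Type*} [Fintype m] [Fintype n]

theorem posDef_neg {M : Matrix n n ℝ} (hM : NegDef M) : (-M).PosDef := by
  refine .of_dotProduct_mulVec_pos (IsHermitian.neg (by simpa using hM.1)) fun x hx => ?_
  simpa [neg_mulVec] using hM.2 x hx

theorem of_fromBlocks {M : Matrix n n ℝ} {B : Matrix n m ℝ} {C : Matrix m n ℝ} {D : Matrix m m ℝ}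
    (h : NegDef (fromBlocks M B C D)) : NegDef M := by
  refine ⟨(isSymm_fromBlocks_iff.mp h.1).1, fun x hx => ?_⟩
  have extend_ne_zero : Sum.elim x (0 : m → ℝ) ≠ 0 := fun h0 =>
    hx (funext fun i => congrFun h0 (Sum.inl i))
  simpa [fromBlocks_mulVec] using h.2 _ extend_ne_zero

end NegDef

section Lyapunov

open scoped ComplexOrder

variable {n : Type*} [Fintype n]

/-- A complex matrix is *Hurwitz* (stable) if its spectrum lies in the open left half-plane. A real
matrix is called Hurwitz when its entrywise image in `ℂ` is. -/
def IsHurwitz (F : Matrix n n ℂ) : Prop :=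
  ∀ μ : ℂ, Module.End.HasEigenvalue F.mulVecLin μ → μ.re < 0

theorem star_dotProduct_lyapunov_mulVec_of_mulVec_eq_smul {R : Type*} [CommRing R]
    [StarRing R] {P F : Matrix n n R} (hP : P.IsHermitian) {μ : R} {v : n → R}
    (hv : F *ᵥ v = μ • v) :
    star v ⬝ᵥ (P * F + (P * F)ᴴ) *ᵥ v = (μ + star μ) * (star v ⬝ᵥ P *ᵥ v) := by
  have direct : star v ⬝ᵥ (P * F) *ᵥ v = μ * (star v ⬝ᵥ P *ᵥ v) := by
    rw [← mulVec_mulVec, hv, mulVec_smul, dotProduct_smul, smul_eq_mul]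
  have adjoint : star v ⬝ᵥ (P * F)ᴴ *ᵥ v = star μ * (star v ⬝ᵥ P *ᵥ v) := by
    rw [conjTranspose_mul, hP.eq, ← mulVec_mulVec, dotProduct_mulVec, ← star_mulVec, hv,
      star_smul, smul_dotProduct, smul_eq_mul]
  rw [add_mulVec, dotProduct_add, direct, adjoint, add_mul]

theorem isHurwitz_of_posDef_neg_lyapunov {P F : Matrix n n ℂ} (hP : P.PosSemidef)
    (hPF : (-(P * F + (P * F)ᴴ)).PosDef) : IsHurwitz F := by
  intro μ hμ
  obtain ⟨v, hv⟩ := hμ.exists_hasEigenvector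
  have form_neg : (star v ⬝ᵥ (P * F + (P * F)ᴴ) *ᵥ v).re < 0 := by
    simpa only [neg_mulVec, dotProduct_neg, map_neg, neg_pos, RCLike.re_eq_complex_re] using
      hPF.re_dotProduct_pos hv.2
  have form_eq : (star v ⬝ᵥ (P * F + (P * F)ᴴ) *ᵥ v).re =
      2 * μ.re * (star v ⬝ᵥ P *ᵥ v).re := by
    rw [star_dotProduct_lyapunov_mulVec_of_mulVec_eq_smul hP.isHermitian hv.apply_eq_smul,
      Complex.star_def, Complex.add_conj, Complex.re_ofReal_mul]
  have weight_nonneg : 0 ≤ (star v ⬝ᵥ P *ᵥ v).re := hP.re_dotProduct_nonneg v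
  linarith [neg_of_mul_neg_left (form_eq ▸ form_neg) weight_nonneg]

theorem isHurwitz_map_ofReal_of_negDef_lyapunov {P F : Matrix n n ℝ} (hP : P.PosSemidef)
    (hPF : NegDef (P * F + (P * F)ᵀ)) : IsHurwitz (F.map Complex.ofReal) := by
  have map_lyapunov : (-(P * F + (P * F)ᵀ)).map Complex.ofReal =
      -(P.map Complex.ofReal * F.map Complex.ofReal +
        (P.map Complex.ofReal * F.map Complex.ofReal)ᴴ) := by
    ext i j
    simp [mul_apply]
  refine isHurwitz_of_posDef_neg_lyapunov (P := P.map Complex.ofReal) (posSemidef_map_ofReal hP) ?_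
  rw [← map_lyapunov]
  exact posDef_map_ofReal hPF.posDef_neg

end Lyapunov

theorem h2_lmi_hurwitz_general {n m k : Type*} [Fintype n] [DecidableEq n] [Fintype m] [Fintype k]
    {A X : Matrix n n ℝ} {Cy : Matrix m n ℝ} {Y : Matrix n m ℝ}
    {M₁₂ : Matrix n k ℝ} {M₂₁ : Matrix k n ℝ} {M₂₂ : Matrix k k ℝ} (hX : X.PosDef)
    (hLMI : NegDef (fromBlocks ((X * A + Y * Cy) + (X * A + Y * Cy)ᵀ) M₁₂ M₂₁ M₂₂)) :
    IsHurwitz ((A + X⁻¹ * Y * Cy).map Complex.ofReal) := by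
  have closed_loop : X * (A + X⁻¹ * Y * Cy) = X * A + Y * Cy := by
    rw [Matrix.mul_add, Matrix.mul_assoc X⁻¹,
      mul_nonsing_inv_cancel_left _ _ ((isUnit_iff_isUnit_det X).mp hX.isUnit)]
  refine isHurwitz_map_ofReal_of_negDef_lyapunov hX.posSemidef ?_
  rw [closed_loop]
  exact hLMI.of_fromBlocks

/-- Feasibility of the `H₂` LMI of Theorem 1 yields a stabilizing observer gain:
if `[[M₁₁, M₁₂, Y], [M₁₂ᵀ, -I, 0], [Yᵀ, 0, -diag β]] ≺ 0` with `X ≻ 0`, then every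
complex eigenvalue of `A + X⁻¹ Y C_y` has negative real part. -/
theorem h2_lmi_hurwitz {n nd ny nz : ℕ}
    (A : Matrix (Fin n) (Fin n) ℝ) (Cy : Matrix (Fin ny) (Fin n) ℝ)
    (Cz : Matrix (Fin nz) (Fin n) ℝ) (Bd : Matrix (Fin n) (Fin nd) ℝ)
    (Dd : Matrix (Fin ny) (Fin nd) ℝ)
    (sd : Fin nd → ℝ) (sn : Fin ny → ℝ) (hsn : ∀ i, 0 < sn i)
    (Sd : Matrix (Fin nd) (Fin nd) ℝ) (hSd : Sd = diagonal sd)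
    (β : Fin ny → ℝ) (hβ : ∀ i, β i = ((sn i)⁻¹) ^ 2)
    (X : Matrix (Fin n) (Fin n) ℝ) (Y : Matrix (Fin n) (Fin ny) ℝ)
    (hX : X.PosDef)
    (M₁₁ : Matrix (Fin n) (Fin n) ℝ) (M₁₂ : Matrix (Fin n) (Fin nd) ℝ)
    (hM₁₁ : M₁₁ = (X * A + Y * Cy) + (X * A + Y * Cy)ᵀ)
    (hM₁₂ : M₁₂ = X * Bd * Sd + Y * Dd * Sd)
    (hLMI : NegDef (fromBlocks M₁₁ (fromCols M₁₂ Y) (fromRows M₁₂ᵀ Yᵀ)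
      (fromBlocks (-(1 : Matrix (Fin nd) (Fin nd) ℝ)) 0 0 (-(diagonal β))))) :
    ∀ μ : ℂ, Module.End.HasEigenvalue
      (Matrix.mulVecLin (((A + X⁻¹ * Y * Cy)).map (Complex.ofReal : ℝ → ℂ))) μ →
      μ.re < 0 := by
  subst hM₁₁
  exact h2_lmi_hurwitz_general hX hLMI
end
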